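/- For every fixed integer t ≥ 1 there exist a constant c > 0 and a natural number d₀ (depending only on t) such that for every integer d ≥ d₀ the following holds: for every set V of 2d points in general position in ℝ^d that is in convex position and forms the vertex set of a d-dimensional convex polytope conv(V) which is t-neighborly but not (t+1)-neighborly, the number of unordered pairs {B, C} of disjoint d-element subsets of V such that the relative interiors of the convex hulls of B and of C have a common point is at least c · 2^d · d^{3/2}. -/

import Mathlib

/-!
For all large `d` the bound holds for every set `V` of `2d` points in general position.

Let `W` be the `(d-1)`-dimensional space of affine dependencies of `V`. If `w ∈ W` has no zero on
`V` and exactly `d` positive entries, with support `B`, then dividing by the sum of the positive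
entries exhibits a common point of the relative interiors of `conv B` and `conv (V \ B)`. So it
suffices to count the subsets `B` of size `d` that are positive parts of nowhere zero dependencies
(balanced sign patterns); each crossing pair arises from at most two of them. General position is
used only through one property of `W`: values on any `d - 1` points of `V` can be prescribed freely
(`Interpolates`, `interpolates_affDeps`).

For disjoint `Z, X ⊆ V`, consider sign patterns on `X` of members of `W` vanishing on `Z`, with the
numbers of plus and minus signs differing by at most `K`; call their number `N_K(Z, X)`.

* Deletion-contraction (`card_balPats_insert`): a pattern on `X` extends to `X ∪ {e}`, and in both
  ways if it comes from a member of `W` that also vanishes at `e`. As `e` changes the imbalance by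
  one, `N_K(Z, X) + N_K(Z ∪ {e}, X) ≤ N_{K+1}(Z, X ∪ {e})`.
* Base case (`balPats_one_nonempty`): if the members of `W` vanishing on `Z` form a space of
  dimension at least two, moving from `w₀` to `-w₀` along a generic path changes one sign at a time,
  so some pattern has imbalance at most one.
* These are the recursion and the boundary values of Pascal's triangle, hence
  `N_{K+1}(Z, X) ≥ K.choose k` when `|Z| + k + 2 ≤ d - 1` (`choose_le_card_balPats`).

Take `R ⊆ V` of size `2h` with `2h` slightly below `d`, `k = 5` and `K` about `√d`. There are at
least `K.choose 5`, of order `d^{5/2}`, nearly balanced patterns on `V \ R` coming from dependencies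
vanishing on `R`. A small perturbation gives each of them any prescribed signs on `R`, and the
number of sign choices on `R` that restore exact balance is a binomial coefficient
`(2h).choose (h ± s)` with `2 s² ≤ h`. This is at least half the central one
(`centralBinom_le_two_mul_choose`), hence at least of order `2^d / d`. The product has order
`2^d d^{3/2}`.
-/

noncomputable section

/-- Points of `ℝ^d`. -/
abbrev Pt (d : ℕ) := EuclideanSpace ℝ (Fin d)

/-- A finite point set is in general position in `ℝ^d` if every subset of at most
`d + 1` of its points is affinely independent. -/
def GenPos (d : ℕ) (V : Finset (Pt d)) : Prop :=
  ∀ S : Finset (Pt d), S ⊆ V → S.card ≤ d + 1 →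
    AffineIndependent ℝ ((↑) : {x // x ∈ (S : Set (Pt d))} → Pt d)

/-- Two vertex-disjoint point sets form a crossing pair of simplices if the
relative (intrinsic) interiors of their convex hulls have a common point. -/
def CrossingPair (d : ℕ) (B C : Finset (Pt d)) : Prop :=
  Disjoint B C ∧
    (intrinsicInterior ℝ (convexHull ℝ (B : Set (Pt d))) ∩
      intrinsicInterior ℝ (convexHull ℝ (C : Set (Pt d)))).Nonempty

/-- The set of unordered pairs `{B, C}` of disjoint `d`-element subsets of `V`
whose simplices cross: the crossing pairs of hyperedges. -/
def crossingHyperedgePairs (d : ℕ) (V : Finset (Pt d)) : Set (Sym2 (Finset (Pt d))) :=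
  {p | ∃ B C : Finset (Pt d), p = s(B, C) ∧ B ⊆ V ∧ C ⊆ V ∧
        B.card = d ∧ C.card = d ∧ CrossingPair d B C}


/-- A finite point set is in convex position if no point of it lies in the convex
hull of the remaining points. -/
def ConvexPos (d : ℕ) (V : Finset (Pt d)) : Prop :=
  ∀ v ∈ V, v ∉ convexHull ℝ ((V : Set (Pt d)) \ {v})

/-- `S` is a face of the polytope `conv V`: some linear functional attains the
value `a` on all of `S` and values `< a` on the rest of `V`. -/
def IsFaceOf (d : ℕ) (S V : Finset (Pt d)) : Prop :=
  S ⊆ V ∧ ∃ (f : Pt d →ₗ[ℝ] ℝ) (a : ℝ),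
    (∀ x ∈ S, f x = a) ∧ ∀ y ∈ V, y ∉ S → f y < a

/-- The polytope `conv V` is `t`-neighborly: every subset of `V` with at most `t`
elements is a face of `conv V`. -/
def Neighborly (d t : ℕ) (V : Finset (Pt d)) : Prop :=
  ∀ S : Finset (Pt d), S ⊆ V → S.card ≤ t → IsFaceOf d S V

/-! ### Binomial coefficients near the centre -/

lemma centralBinom_mul_le (h s : ℕ) :
    ((h : ℝ) - (s : ℝ) ^ 2) * Nat.centralBinom h ≤ h * Nat.choose (2 * h) (h + s) := by
  induction s with
  | zero => simp [Nat.centralBinom]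
  | succ s ih =>
    rcases le_or_gt h s with hs | hs
    · have h1 : (h : ℝ) ≤ s := by exact_mod_cast hs
      have h2 : (h : ℝ) - ((s + 1 : ℕ) : ℝ) ^ 2 ≤ 0 := by push_cast; nlinarith
      exact (mul_nonpos_of_nonpos_of_nonneg h2 (by positivity)).trans (by positivity)
    · have hr : (Nat.choose (2 * h) (h + (s + 1)) : ℝ) * (h + s + 1)
          = Nat.choose (2 * h) (h + s) * (h - s) := by
        have := Nat.choose_succ_right_eq (2 * h) (h + s)
        have h3 : 2 * h - (h + s) = h - s := by omega
        rw [h3] at this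
        have h4 : ((h - s : ℕ) : ℝ) = h - s := by push_cast [hs.le]; ring
        rw [← h4]
        exact_mod_cast this
      have hsr : (s : ℝ) + 1 ≤ h := by exact_mod_cast hs
      have hpos : (0 : ℝ) < h + s + 1 := by positivity
      refine le_of_mul_le_mul_right ?_ hpos
      rw [mul_assoc (h : ℝ), hr]
      have hkey : ((h : ℝ) - ((s + 1 : ℕ) : ℝ) ^ 2) * (h + s + 1) ≤
          (h - (s : ℝ) ^ 2) * (h - s) := by
        push_cast
        have : (0 : ℝ) ≤ (s : ℝ) ^ 3 := by positivity
        have : (0 : ℝ) ≤ ((s : ℝ) + 1) ^ 3 := by positivity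
        nlinarith
      have hc : (0 : ℝ) ≤ Nat.centralBinom h := by positivity
      nlinarith [mul_le_mul_of_nonneg_right hkey hc,
        mul_le_mul_of_nonneg_right ih (sub_nonneg.2 (by linarith : (s : ℝ) ≤ h))]

lemma centralBinom_le_two_mul_choose {h j : ℕ} (hh : 0 < h)
    (hj : 2 * ((h : ℤ) - j) ^ 2 ≤ h) :
    Nat.centralBinom h ≤ 2 * Nat.choose (2 * h) j := by
  obtain ⟨s, hs2, hs⟩ : ∃ s : ℕ, 2 * (s : ℤ) ^ 2 ≤ h ∧
      Nat.choose (2 * h) j = Nat.choose (2 * h) (h + s) := by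
    rcases le_total h j with hle | hle
    · refine ⟨j - h, ?_, by congr 1; omega⟩
      push_cast [hle]; linarith [show ((j : ℤ) - h) ^ 2 = (h - j) ^ 2 by ring]
    · refine ⟨h - j, ?_, ?_⟩
      · push_cast [hle]; linarith
      · exact Nat.choose_symm_of_eq_add (by omega)
  rw [hs]
  have h1 := centralBinom_mul_le h s
  have h2 : 2 * (s : ℝ) ^ 2 ≤ h := by exact_mod_cast hs2
  have h3 : (0 : ℝ) < h := by exact_mod_cast hh
  have hc : (0 : ℝ) ≤ Nat.centralBinom h := by positivity
  have : (h : ℝ) * Nat.centralBinom h ≤ h * (2 * Nat.choose (2 * h) (h + s)) := by nlinarith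
  exact_mod_cast le_of_mul_le_mul_left this h3

/-! ### Balanced thresholds -/

open Filter Topology in
/-- Discrete intermediate value property: as `τ` runs through `ℝ`, the set of `x ∈ X` with
`x ∈ A ↔ τ < t x` passes from `A` to `X \ A`, one element at a time, so some `τ` splits `X` evenly
up to one element. -/
lemma exists_balanced_threshold_aux {α : Type*} [DecidableEq α] (X A : Finset α) (t : α → ℝ)
    (hA : A ⊆ X) (ht : Set.InjOn t X) (hAX : X.card ≤ 2 * A.card) :
    ∃ τ : ℝ, (∀ x ∈ X, t x ≠ τ) ∧
      2 * (X.filter fun x => x ∈ A ↔ τ < t x).card ≤ X.card + 1 ∧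
      X.card ≤ 2 * (X.filter fun x => x ∈ A ↔ τ < t x).card + 1 := by
  rcases le_or_gt (2 * A.card) (X.card + 1) with hA1 | hA1
  · obtain ⟨τ, hτ⟩ : ∃ τ : ℝ, ∀ x ∈ X, τ < t x := by
      obtain ⟨m, hm⟩ := (X.image t).bddBelow
      refine ⟨m - 1, fun x hx => ?_⟩
      have := hm (by simpa using ⟨x, hx, rfl⟩ : t x ∈ ((X.image t : Finset ℝ) : Set ℝ))
      linarith
    have : (X.filter fun x => x ∈ A ↔ τ < t x) = A := by
      ext x; simp only [Finset.mem_filter]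
      constructor
      · rintro ⟨h1, h2⟩; exact h2.2 (hτ x h1)
      · intro h; exact ⟨hA h, by simp [h, hτ x (hA h)]⟩
    exact ⟨τ, fun x hx => (hτ x hx).ne', by rw [this]; omega, by rw [this]; omega⟩
  -- `M x` is the pattern for a threshold just above `t x`
  set M : α → Finset α := fun x => X.filter fun y => y ∈ A ↔ t x < t y with hM
  set S := X.filter fun x => 2 * (M x).card ≤ X.card with hS
  have hAle := Finset.card_le_card hA
  have hSne : S.Nonempty := by
    have hXne : X.Nonempty := Finset.card_pos.1 (by omega)
    obtain ⟨x, hx, hmax⟩ := X.exists_max_image t hXne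
    refine ⟨x, Finset.mem_filter.2 ⟨hx, ?_⟩⟩
    have : M x = X \ A := by
      ext y; simp only [hM, Finset.mem_filter, Finset.mem_sdiff]
      constructor
      · rintro ⟨h1, h2⟩; exact ⟨h1, fun h => absurd (h2.1 h) (not_lt.2 (hmax y h1))⟩
      · rintro ⟨h1, h2⟩; exact ⟨h1, by simp [h2, hmax y h1]⟩
    rw [this, Finset.card_sdiff_of_subset hA]; omega
  -- at the first point `x` where the count drops to `|X| / 2` or below, it drops by at most one
  obtain ⟨x, hxS, hmin⟩ := S.exists_min_image t hSne
  obtain ⟨hxX, hxc⟩ := Finset.mem_filter.1 hxS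
  -- `B` is the pattern for a threshold just below `t x`
  set B := X.filter fun y => y ∈ A ↔ t x ≤ t y with hB
  have hBM : B ⊆ insert x (M x) := by
    intro y hy
    obtain ⟨hy1, hy2⟩ := Finset.mem_filter.1 hy
    by_cases hyx : y = x
    · simp [hyx]
    · refine Finset.mem_insert_of_mem (Finset.mem_filter.2 ⟨hy1, ?_⟩)
      have : t x ≠ t y := fun h => hyx (ht hy1 hxX h.symm)
      rw [hy2]; exact ⟨fun h => lt_of_le_of_ne h this, le_of_lt⟩
  have hBc : B.card ≤ (M x).card + 1 := (Finset.card_le_card hBM).trans (Finset.card_insert_le _ _)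
  have hBbig : X.card < 2 * B.card := by
    rcases (X.filter fun y => t y < t x).eq_empty_or_nonempty with h0 | h0
    · have : B = A := by
        have hge : ∀ y ∈ X, t x ≤ t y := fun y hy => by
          by_contra hlt
          exact Finset.notMem_empty y (h0 ▸ Finset.mem_filter.2 ⟨hy, not_le.1 hlt⟩)
        ext y; simp only [hB, Finset.mem_filter]
        constructor
        · rintro ⟨h1, h2⟩; exact h2.2 (hge y h1)
        · intro h; exact ⟨hA h, by simp [h, hge y (hA h)]⟩
      rw [this]; omega
    · obtain ⟨y, hy, hmax⟩ := Finset.exists_max_image _ t h0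
      obtain ⟨hyX, hyx⟩ := Finset.mem_filter.1 hy
      have : M y = B := by
        ext z; simp only [hM, hB, Finset.mem_filter]
        refine and_congr_right fun hz => ?_
        have : t y < t z ↔ t x ≤ t z := by
          refine ⟨fun h => ?_, fun h => hyx.trans_le h⟩
          by_contra hlt
          exact absurd (hmax z (Finset.mem_filter.2 ⟨hz, not_le.1 hlt⟩)) (not_le.2 h)
        rw [this]
      rw [← this]
      by_contra hcon
      exact absurd (hmin y (Finset.mem_filter.2 ⟨hyX, not_lt.1 hcon⟩)) (not_le.2 hyx)
  obtain ⟨τ, hτx, hτ⟩ : ∃ τ : ℝ, t x < τ ∧ ∀ z ∈ X, t x < t z → τ < t z := by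
    have h1 : ∀ᶠ τ in 𝓝[>] (t x), ∀ z ∈ X, t x < t z → τ < t z := by
      rw [Finset.eventually_all]
      intro z _
      by_cases hz : t x < t z
      · filter_upwards [mem_nhdsWithin_of_mem_nhds (Iio_mem_nhds hz)] with τ h _ using h
      · exact Eventually.of_forall fun τ h => absurd h hz
    obtain ⟨τ, h2, h3⟩ := (h1.and self_mem_nhdsWithin).exists
    exact ⟨τ, h3, h2⟩
  have hiff : ∀ z ∈ X, (τ < t z ↔ t x < t z) := fun z hz => ⟨hτx.trans, hτ z hz⟩
  have hfil : (X.filter fun z => z ∈ A ↔ τ < t z) = M x :=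
    Finset.filter_congr fun z hz => by rw [hiff z hz]
  refine ⟨τ, fun z hz h => ?_, by rw [hfil]; omega, by rw [hfil]; omega⟩
  have : t x < t z := h ▸ hτx
  exact absurd (hτ z hz this) (by simp [h])

/-- The previous lemma without the assumption that `A` is at least half of `X`. -/
lemma exists_balanced_threshold {α : Type*} [DecidableEq α] (X A : Finset α) (t : α → ℝ)
    (hA : A ⊆ X) (ht : Set.InjOn t X) :
    ∃ τ : ℝ, (∀ x ∈ X, t x ≠ τ) ∧
      2 * (X.filter fun x => x ∈ A ↔ τ < t x).card ≤ X.card + 1 ∧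
      X.card ≤ 2 * (X.filter fun x => x ∈ A ↔ τ < t x).card + 1 := by
  rcases le_total X.card (2 * A.card) with h | h
  · exact exists_balanced_threshold_aux X A t hA ht h
  · have hc := Finset.card_sdiff_of_subset hA
    have := Finset.card_le_card hA
    obtain ⟨τ, h1, h2, h3⟩ := exists_balanced_threshold_aux X (X \ A) t Finset.sdiff_subset ht
      (by omega)
    have hfil : (X.filter fun x => x ∈ X \ A ↔ τ < t x) =
        X.filter fun x => ¬ (x ∈ A ↔ τ < t x) :=
      Finset.filter_congr fun x hx => by simp only [Finset.mem_sdiff, hx, true_and]; tauto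
    have := Finset.card_filter_add_card_filter_not (s := X) (fun x => x ∈ A ↔ τ < t x)
    rw [hfil] at h2 h3
    exact ⟨τ, h1, by omega, by omega⟩

/-! ### Sign patterns -/

/-- Members of `W` take arbitrary prescribed values on any at most `N` points of `E`. For the space
of affine dependencies of `E` this is the dual form of general position. -/
def Interpolates {α : Type*} (W : Submodule ℝ (α → ℝ)) (E : Finset α) (N : ℕ) : Prop :=
  ∀ S : Finset α, S ⊆ E → S.card ≤ N → ∀ g : α → ℝ, ∃ w ∈ W, ∀ x ∈ S, w x = g x

/-- `P` is the set of positive entries on `X` of some member of `W` that vanishes on `Z` and has no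
zero on `X`. Nothing is required outside `Z ∪ X`. -/
def IsPat {α : Type*} (W : Submodule ℝ (α → ℝ)) (Z X P : Finset α) : Prop :=
  P ⊆ X ∧ ∃ w ∈ W, (∀ x ∈ Z, w x = 0) ∧ (∀ x ∈ P, 0 < w x) ∧ ∀ x ∈ X, x ∉ P → w x < 0

open Classical in
/-- The sign patterns on `X` of members of `W` vanishing on `Z`, encoded by their positive parts,
whose numbers of plus and minus signs differ by at most `K`. -/
def balPats {α : Type*} (W : Submodule ℝ (α → ℝ)) (K : ℕ) (Z X : Finset α) :
    Finset (Finset α) :=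
  X.powerset.filter fun P =>
    IsPat W Z X P ∧ 2 * P.card ≤ X.card + K ∧ X.card ≤ 2 * P.card + K

lemma mem_balPats {α : Type*} {W : Submodule ℝ (α → ℝ)} {K : ℕ} {Z X P : Finset α} :
    P ∈ balPats W K Z X ↔ IsPat W Z X P ∧ 2 * P.card ≤ X.card + K ∧ X.card ≤ 2 * P.card + K := by
  classical
  simp only [balPats, Finset.mem_filter, Finset.mem_powerset, and_iff_right_iff_imp]
  exact fun h => h.1.1

open Filter Topology in
lemma exists_perturb {α : Type*} (X : Finset α) (w₀ w₁ : α → ℝ) :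
    ∃ ε : ℝ, 0 < ε ∧ ∀ x ∈ X, (0 < w₀ x → 0 < w₀ x + ε * w₁ x) ∧
      (w₀ x < 0 → w₀ x + ε * w₁ x < 0) := by
  have h : ∀ᶠ ε in 𝓝[>] (0 : ℝ), ∀ x ∈ X, (0 < w₀ x → 0 < w₀ x + ε * w₁ x) ∧
      (w₀ x < 0 → w₀ x + ε * w₁ x < 0) := by
    rw [Finset.eventually_all]
    intro x _
    have hc : Tendsto (fun ε : ℝ => w₀ x + ε * w₁ x) (𝓝[>] 0) (𝓝 (w₀ x)) := by
      have : Continuous fun ε : ℝ => w₀ x + ε * w₁ x := by fun_prop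
      simpa using (this.tendsto 0).mono_left nhdsWithin_le_nhds
    refine Eventually.and ?_ ?_
    · by_cases hx : 0 < w₀ x
      · filter_upwards [hc.eventually (lt_mem_nhds hx)] with ε h _ using h
      · exact Eventually.of_forall fun _ h => absurd h hx
    · by_cases hx : w₀ x < 0
      · filter_upwards [hc.eventually (gt_mem_nhds hx)] with ε h _ using h
      · exact Eventually.of_forall fun _ h => absurd h hx
  obtain ⟨ε, h1, h2⟩ := (h.and self_mem_nhdsWithin).exists
  exact ⟨ε, h2, h1⟩

/-- If a pattern on `X` is realized with zeros on `Z ∪ R`, it is also realized with zeros only on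
`Z` and any prescribed signs on `R`, by a small perturbation. -/
lemma IsPat.extend {α : Type*} [DecidableEq α] {W : Submodule ℝ (α → ℝ)} {E : Finset α} {N : ℕ}
    (hW : Interpolates W E N) {Z R X P Q : Finset α} (hZR : Disjoint Z R)
    (hZ : Z ⊆ E) (hR : R ⊆ E) (hc : Z.card + R.card ≤ N) (hP : IsPat W (Z ∪ R) X P)
    (hQ : Q ⊆ R) : IsPat W Z (R ∪ X) (Q ∪ P) := by
  obtain ⟨hPX, w₀, hw₀, hw0, hwp, hwn⟩ := hP
  obtain ⟨w₁, hw₁, hw1⟩ := hW (Z ∪ R) (Finset.union_subset hZ hR)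
    ((Finset.card_union_le _ _).trans hc)
    (fun x => if x ∈ Z then 0 else if x ∈ Q then 1 else -1)
  obtain ⟨ε, hε, hpert⟩ := exists_perturb X w₀ w₁
  have hval : ∀ x ∈ R, w₁ x = if x ∈ Q then 1 else -1 := fun x hx => by
    rw [hw1 x (Finset.mem_union_right _ hx), if_neg (Finset.disjoint_right.1 hZR hx)]
  refine ⟨Finset.union_subset_union hQ hPX, w₀ + ε • w₁,
    W.add_mem hw₀ (W.smul_mem _ hw₁), fun x hx => ?_, fun x hx => ?_, fun x hx hxn => ?_⟩
  · simp [hw0 x (Finset.mem_union_left _ hx), hw1 x (Finset.mem_union_left _ hx), hx]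
  · simp only [Pi.add_apply, Pi.smul_apply, smul_eq_mul]
    rcases Finset.mem_union.1 hx with h | h
    · rw [hw0 x (Finset.mem_union_right _ (hQ h)), hval x (hQ h), if_pos h]; linarith
    · exact (hpert x (hPX h)).1 (hwp x h)
  · simp only [Pi.add_apply, Pi.smul_apply, smul_eq_mul]
    simp only [Finset.mem_union, not_or] at hxn
    rcases Finset.mem_union.1 hx with h | h
    · rw [hw0 x (Finset.mem_union_right _ h), hval x h, if_neg hxn.1]; linarith
    · exact (hpert x h).2 (hwn x h hxn.2)

/-- Deletion-contraction for nearly balanced patterns. -/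
lemma card_balPats_insert {α : Type*} [DecidableEq α] {W : Submodule ℝ (α → ℝ)} {E : Finset α}
    {N : ℕ} (hW : Interpolates W E N) (K : ℕ) {Z X : Finset α} {e : α} (heZ : e ∉ Z)
    (heX : e ∉ X) (hZ : Z ⊆ E) (he : e ∈ E) (hc : Z.card + 1 ≤ N) :
    (balPats W K Z X).card + (balPats W K (insert e Z) X).card ≤
      (balPats W (K + 1) Z (insert e X)).card := by
  classical
  set T := balPats W (K + 1) Z (insert e X) with hT
  set A := balPats W K Z X with hA
  have hXc : (insert e X).card = X.card + 1 := Finset.card_insert_of_notMem heX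
  have heP : ∀ P, P ⊆ X → e ∉ P := fun P hP h => heX (hP h)
  -- the contraction patterns extend in both ways
  have hcontr : ∀ P ∈ balPats W K (insert e Z) X, P ∈ T ∧ insert e P ∈ T := by
    intro P hP
    obtain ⟨hp, h1, h2⟩ := mem_balPats.1 hP
    have hext : ∀ Q : Finset α, Q ⊆ {e} → IsPat W Z ({e} ∪ X) (Q ∪ P) := fun Q hQ =>
      IsPat.extend hW (by simpa using heZ) hZ (by simpa using he)
        (by simpa using hc) (by rwa [Finset.union_comm, ← Finset.insert_eq]) hQ
    have hcP := Finset.card_insert_of_notMem (heP P hp.1)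
    refine ⟨mem_balPats.2 ⟨?_, by omega, by omega⟩, mem_balPats.2 ⟨?_, by omega, by omega⟩⟩
    · rw [Finset.insert_eq]
      simpa only [Finset.empty_union] using hext ∅ (Finset.empty_subset _)
    · rw [Finset.insert_eq, Finset.insert_eq]
      exact hext {e} (Finset.Subset.refl _)
  have hsub : balPats W K (insert e Z) X ⊆ A := by
    intro P hP
    obtain ⟨⟨hp, w, hw, hw0, hr⟩, h1⟩ := mem_balPats.1 hP
    exact mem_balPats.2 ⟨⟨hp, w, hw, fun x hx => hw0 x (Finset.mem_insert_of_mem hx), hr⟩, h1⟩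
  -- every pattern on `X` extends in at least one way
  have hdel : ∀ P ∈ A, P ∈ T ∨ insert e P ∈ T := by
    intro P hP
    obtain ⟨⟨hp, w, hw, hw0, hwp, hwn⟩, h1, h2⟩ := mem_balPats.1 hP
    have hcP := Finset.card_insert_of_notMem (heP P hp)
    rcases lt_trichotomy (w e) 0 with h | h | h
    · refine Or.inl (mem_balPats.2 ⟨⟨hp.trans (Finset.subset_insert _ _), w, hw, hw0, hwp, ?_⟩,
        by omega, by omega⟩)
      intro x hx hxP
      rcases Finset.mem_insert.1 hx with rfl | hx
      · exact h
      · exact hwn x hx hxP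
    · refine Or.inl (hcontr P (mem_balPats.2 ⟨⟨hp, w, hw, ?_, hwp, hwn⟩, h1, h2⟩)).1
      intro x hx
      rcases Finset.mem_insert.1 hx with rfl | hx
      · exact h
      · exact hw0 x hx
    · refine Or.inr (mem_balPats.2 ⟨⟨Finset.insert_subset_insert _ hp, w, hw, hw0, ?_, ?_⟩,
        by omega, by omega⟩)
      · intro x hx
        rcases Finset.mem_insert.1 hx with rfl | hx
        · exact h
        · exact hwp x hx
      · intro x hx hxP
        simp only [Finset.mem_insert, not_or] at hxP hx
        exact hwn x (hx.resolve_left hxP.1) hxP.2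
  set T₁ := A.filter fun P => P ∈ T
  set T₂ := A.filter fun P => insert e P ∈ T
  have hAX : ∀ P ∈ A, e ∉ P := fun P hP => heP P (mem_balPats.1 hP).1.1
  have hu : A ⊆ T₁ ∪ T₂ := fun P hP => by
    rcases hdel P hP with h | h
    · exact Finset.mem_union_left _ (Finset.mem_filter.2 ⟨hP, h⟩)
    · exact Finset.mem_union_right _ (Finset.mem_filter.2 ⟨hP, h⟩)
  have hi : balPats W K (insert e Z) X ⊆ T₁ ∩ T₂ := fun P hP =>
    Finset.mem_inter.2 ⟨Finset.mem_filter.2 ⟨hsub hP, (hcontr P hP).1⟩,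
      Finset.mem_filter.2 ⟨hsub hP, (hcontr P hP).2⟩⟩
  have hdisj : Disjoint T₁ (T₂.image (insert e)) := by
    rw [Finset.disjoint_left]
    intro P hP hP2
    obtain ⟨Q, _, rfl⟩ := Finset.mem_image.1 hP2
    exact hAX _ (Finset.mem_filter.1 hP).1 (Finset.mem_insert_self _ _)
  have himg : (T₂.image (insert e)).card = T₂.card := by
    refine Finset.card_image_of_injOn fun P hP Q hQ hPQ => ?_
    have h1 := hAX P (Finset.mem_filter.1 hP).1
    have h2 := hAX Q (Finset.mem_filter.1 hQ).1
    rw [← Finset.erase_insert h1, ← Finset.erase_insert h2]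
    exact congrArg (fun S => Finset.erase S e) hPQ
  calc _ ≤ (T₁ ∪ T₂).card + (T₁ ∩ T₂).card :=
        add_le_add (Finset.card_le_card hu) (Finset.card_le_card hi)
    _ = T₁.card + (T₂.image (insert e)).card := by rw [Finset.card_union_add_card_inter, himg]
    _ = (T₁ ∪ T₂.image (insert e)).card := (Finset.card_union_of_disjoint hdisj).symm
    _ ≤ T.card := Finset.card_le_card <| Finset.union_subset
        (fun P hP => (Finset.mem_filter.1 hP).2) (fun P hP => by
          obtain ⟨Q, hQ, rfl⟩ := Finset.mem_image.1 hP
          exact (Finset.mem_filter.1 hQ).2)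

/-- Ham-sandwich type statement: a balanced pattern, up to parity, exists as soon as two further
values may be prescribed on top of the zeros on `Z`. -/
lemma balPats_one_nonempty {α : Type*} [DecidableEq α] {W : Submodule ℝ (α → ℝ)} {E : Finset α}
    {N : ℕ} (hW : Interpolates W E N) {Z X : Finset α} (hZ : Z ⊆ E) (hX : X ⊆ E)
    (hZX : Disjoint Z X) (hc : Z.card + 2 ≤ N) : (balPats W 1 Z X).Nonempty := by
  classical
  -- the members of `W` vanishing on `Z`
  let WZ : Submodule ℝ (α → ℝ) := W ⊓ ⨅ x ∈ Z, LinearMap.ker (LinearMap.proj x : (α → ℝ) →ₗ[ℝ] ℝ)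
  have hWZ : ∀ w, w ∈ WZ ↔ w ∈ W ∧ ∀ x ∈ Z, w x = 0 := by
    intro w; simp [WZ, Submodule.mem_iInf]
  have hint : ∀ x ∈ X, ∀ y ∈ X, x ≠ y → ∃ w ∈ WZ, w x = 1 ∧ w y = 0 := by
    intro x hx y hy hxy
    obtain ⟨w, hw, h⟩ := hW (insert x (insert y Z))
      (by simp [Finset.insert_subset_iff, hX hx, hX hy, hZ])
      ((Finset.card_insert_le _ _).trans (by have := Finset.card_insert_le y Z; omega))
      (fun z => if z = x then 1 else 0)
    refine ⟨w, (hWZ w).2 ⟨hw, fun z hz => ?_⟩, ?_, ?_⟩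
    · rw [h z (by simp [hz]), if_neg]
      rintro rfl; exact Finset.disjoint_left.1 hZX hz hx
    · simp [h x (by simp)]
    · rw [h y (by simp), if_neg hxy.symm]
  obtain ⟨w₀, hw₀, hne⟩ := Module.Dual.exists_forall_mem_ne_zero_of_forall_exists (K := ℝ)
    (ι := X) WZ (fun x => (LinearMap.proj x.1 : (α → ℝ) →ₗ[ℝ] ℝ)) (by
      rintro ⟨x, hx⟩
      obtain ⟨w, hw, h⟩ := hW (insert x Z) (by simp [Finset.insert_subset_iff, hX hx, hZ])
        ((Finset.card_insert_le _ _).trans (by omega)) (fun z => if z = x then 1 else 0)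
      refine ⟨w, (hWZ w).2 ⟨hw, fun z hz => ?_⟩, ?_⟩
      · rw [h z (by simp [hz]), if_neg]
        rintro rfl; exact Finset.disjoint_left.1 hZX hz hx
      · simp [h x (by simp)])
  have hne : ∀ x ∈ X, w₀ x ≠ 0 := fun x hx => by simpa using hne ⟨x, hx⟩
  obtain ⟨w₁, hw₁, hne1⟩ := Module.Dual.exists_forall_mem_ne_zero_of_forall_exists (K := ℝ)
    (ι := {p : X × X // p.1 ≠ p.2}) WZ
    (fun p => w₀ p.1.2.1 • (LinearMap.proj p.1.1.1 : (α → ℝ) →ₗ[ℝ] ℝ) -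
      w₀ p.1.1.1 • (LinearMap.proj p.1.2.1 : (α → ℝ) →ₗ[ℝ] ℝ)) (by
      rintro ⟨⟨⟨x, hx⟩, ⟨y, hy⟩⟩, hxy⟩
      obtain ⟨w, hw, h1, h2⟩ := hint x hx y hy (by simpa using hxy)
      exact ⟨w, hw, by simp [h1, h2, hne y hy]⟩)
  -- along `w₁ - τ w₀` the entries change sign at the distinct parameters `τ = t x`
  set t : α → ℝ := fun x => w₁ x / w₀ x with ht
  have hinj : Set.InjOn t X := by
    intro x hx y hy hxy
    by_contra hne'
    refine hne1 ⟨⟨⟨x, hx⟩, ⟨y, hy⟩⟩, by simpa using hne'⟩ ?_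
    simp only [ht] at hxy
    rw [div_eq_div_iff (hne x hx) (hne y hy)] at hxy
    simp only [LinearMap.sub_apply, LinearMap.smul_apply, LinearMap.proj_apply, smul_eq_mul]
    linarith
  obtain ⟨τ, hτ, h1, h2⟩ := exists_balanced_threshold X (X.filter fun x => 0 < w₀ x) t
    (Finset.filter_subset _ _) hinj
  have hfac : ∀ x ∈ X, w₁ x - τ * w₀ x = w₀ x * (t x - τ) := fun x hx => by
    have := hne x hx
    simp only [ht]; field_simp
  refine ⟨_, mem_balPats.2 ⟨⟨Finset.filter_subset _ _, w₁ - τ • w₀,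
    W.sub_mem ((hWZ _).1 hw₁).1 (W.smul_mem _ ((hWZ _).1 hw₀).1), ?_, ?_, ?_⟩, h1, h2⟩⟩
  · intro x hx
    simp [((hWZ _).1 hw₁).2 x hx, ((hWZ _).1 hw₀).2 x hx]
  · intro x hx
    obtain ⟨hxX, hx⟩ := Finset.mem_filter.1 hx
    simp only [Finset.mem_filter, hxX, true_and] at hx
    simp only [Pi.sub_apply, Pi.smul_apply, smul_eq_mul, hfac x hxX]
    rcases (hne x hxX).lt_or_gt with h | h
    · exact mul_pos_of_neg_of_neg h
        (sub_neg.2 (lt_of_le_of_ne (not_lt.1 fun h' => (hx.2 h').not_gt h) (hτ x hxX)))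
    · exact mul_pos h (sub_pos.2 (hx.1 h))
  · intro x hxX hx
    simp only [Finset.mem_filter, hxX, true_and] at hx
    simp only [Pi.sub_apply, Pi.smul_apply, smul_eq_mul, hfac x hxX]
    rcases (hne x hxX).lt_or_gt with h | h
    · refine mul_neg_of_neg_of_pos h (sub_pos.2 ?_)
      by_contra h'
      exact hx ⟨fun h'' => absurd h'' h.not_gt, fun h'' => absurd h'' h'⟩
    · refine mul_neg_of_pos_of_neg h (sub_neg.2 (lt_of_le_of_ne (not_lt.1 fun h' => ?_) (hτ x hxX)))
      exact hx ⟨fun _ => h', fun _ => h⟩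

/-- Deletion-contraction is Pascal's rule, and `balPats_one_nonempty` provides the boundary
values. -/
lemma choose_le_card_balPats {α : Type*} [DecidableEq α] {W : Submodule ℝ (α → ℝ)} {E : Finset α}
    {N : ℕ} (hW : Interpolates W E N) (K k : ℕ) {Z X : Finset α} (hZ : Z ⊆ E) (hX : X ⊆ E)
    (hZX : Disjoint Z X) (hc : Z.card + k + 2 ≤ N) (hK : K ≤ X.card) :
    K.choose k ≤ (balPats W (K + 1) Z X).card := by
  induction K generalizing k Z X with
  | zero =>
    cases k with
    | zero => simpa using (balPats_one_nonempty hW hZ hX hZX (by omega)).card_pos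
    | succ k => simp
  | succ K ih =>
    cases k with
    | zero =>
      obtain ⟨P, hP⟩ := balPats_one_nonempty hW hZ hX hZX (by omega)
      obtain ⟨h, h1, h2⟩ := mem_balPats.1 hP
      simpa using Finset.card_pos.2 ⟨P, mem_balPats.2 ⟨h, by omega, by omega⟩⟩
    | succ k =>
      obtain ⟨e, he⟩ := Finset.card_pos.1 (by omega : 0 < X.card)
      obtain ⟨Y, heY, rfl⟩ : ∃ Y, e ∉ Y ∧ insert e Y = X :=
        ⟨X.erase e, Finset.notMem_erase _ _, Finset.insert_erase he⟩
      have hYc := Finset.card_insert_of_notMem heY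
      have heZ : e ∉ Z := fun h => Finset.disjoint_left.1 hZX h he
      have hY : Y ⊆ E := (Finset.subset_insert _ _).trans hX
      have hZY : Disjoint Z Y := hZX.mono_right (Finset.subset_insert _ _)
      have heZc := Finset.card_insert_of_notMem heZ
      have h1 := ih (k + 1) hZ hY hZY hc (by omega)
      have h2 := ih k (Z := insert e Z) (Finset.insert_subset (hX he) hZ) hY
        (Finset.disjoint_insert_left.2 ⟨heY, hZY⟩) (by omega) (by omega)
      have h3 := card_balPats_insert hW (K + 1) heZ heY hZ (hX he) (by omega)
      rw [Nat.choose_succ_succ']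
      omega

/-- Lower bound for exactly balanced patterns: nearly balanced patterns outside a set `R` of size
`2 * h` are completed to balanced ones by choosing the signs on `R`. -/
lemma choose_mul_le_card_balanced {α : Type*} [DecidableEq α] {W : Submodule ℝ (α → ℝ)}
    {V : Finset α} {N d h K k : ℕ} (hW : Interpolates W V N) (hV : V.card = 2 * d)
    (hh : 0 < h) (hc : 2 * h + k + 2 ≤ N) (hK : (K + 1) ^ 2 ≤ 2 * h) (hd : 2 * h ≤ d) :
    K.choose k * h.centralBinom ≤ 2 * (balPats W 0 ∅ V).card := by
  classical
  obtain ⟨R, hRV, hR⟩ := Finset.exists_subset_card_eq (s := V) (n := 2 * h) (by omega)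
  set U := V \ R with hU
  have hUc : U.card = 2 * d - 2 * h := by rw [hU, Finset.card_sdiff_of_subset hRV, hV, hR]
  have hRU : Disjoint R U := Finset.disjoint_sdiff
  have hVRU : R ∪ U = V := Finset.union_sdiff_of_subset hRV
  have hKh : K + 1 ≤ 2 * h := by nlinarith
  set A := balPats W (K + 1) R U with hA
  have hAc : K.choose k ≤ A.card :=
    choose_le_card_balPats hW K k hRV Finset.sdiff_subset hRU (by omega) (by omega)
  have hsize : ∀ P ∈ A, P.card ≤ d ∧ h.centralBinom ≤ 2 * (2 * h).choose (d - P.card) := by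
    intro P hP
    obtain ⟨_, h1, h2⟩ := mem_balPats.1 hP
    have hle : P.card ≤ d := by omega
    refine ⟨hle, centralBinom_le_two_mul_choose hh ?_⟩
    push_cast [hle]
    have h3 : 2 * ((h : ℤ) - (d - P.card)) ≤ K + 1 := by omega
    have h4 : -((K : ℤ) + 1) ≤ 2 * ((h : ℤ) - (d - P.card)) := by omega
    have h5 : ((K : ℤ) + 1) ^ 2 ≤ 2 * h := by exact_mod_cast hK
    nlinarith [sq_le_sq' h4 h3]
  have hinj : (A.sigma fun P => R.powersetCard (d - P.card)).card ≤ (balPats W 0 ∅ V).card := by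
    refine Finset.card_le_card_of_injOn (fun p => p.2 ∪ p.1) ?_ ?_
    · rintro ⟨P, Q⟩ hp
      obtain ⟨hP, hQ⟩ := Finset.mem_sigma.1 hp
      obtain ⟨hQR, hQc⟩ := Finset.mem_powersetCard.1 hQ
      have hpat := (mem_balPats.1 hP).1
      have hext := IsPat.extend hW (Z := ∅) (Q := Q) (by simp) (by simp) hRV
        (by simp; omega) (by simpa using hpat) hQR
      rw [hVRU] at hext
      have hcard : (Q ∪ P).card = d := by
        have := (hsize P hP).1
        rw [Finset.card_union_of_disjoint (hRU.mono hQR hpat.1)]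
        change Q.card + P.card = d
        change Q.card = d - P.card at hQc
        omega
      change Q ∪ P ∈ balPats W 0 ∅ V
      exact mem_balPats.2 ⟨hext, by omega, by omega⟩
    · rintro ⟨P, Q⟩ hp ⟨P', Q'⟩ hp' heq
      obtain ⟨hP, hQ⟩ := Finset.mem_sigma.1 hp
      obtain ⟨hP', hQ'⟩ := Finset.mem_sigma.1 hp'
      have hfst : ∀ P Q : Finset α, P ⊆ U → Q ⊆ R → (Q ∪ P) \ R = P := fun P Q h1 h2 => by
        rw [Finset.union_sdiff_distrib, Finset.sdiff_eq_empty_iff_subset.2 h2,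
          Finset.empty_union, Finset.sdiff_eq_self_of_disjoint (hRU.symm.mono_left h1)]
      have hsnd : ∀ P Q : Finset α, P ⊆ U → Q ⊆ R → (Q ∪ P) ∩ R = Q := fun P Q h1 h2 => by
        rw [Finset.union_inter_distrib_right, Finset.inter_eq_left.2 h2,
          Finset.disjoint_iff_inter_eq_empty.1 (hRU.symm.mono_left h1), Finset.union_empty]
      have hQR := (Finset.mem_powersetCard.1 hQ).1
      have hQR' := (Finset.mem_powersetCard.1 hQ').1
      have hPU := (mem_balPats.1 hP).1.1
      have hPU' := (mem_balPats.1 hP').1.1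
      have heq : Q ∪ P = Q' ∪ P' := heq
      have hPP : P = P' := by rw [← hfst P Q hPU hQR, heq, hfst P' Q' hPU' hQR']
      have hQQ : Q = Q' := by rw [← hsnd P Q hPU hQR, heq, hsnd P' Q' hPU' hQR']
      subst hPP hQQ; rfl
  calc K.choose k * h.centralBinom ≤ A.card * h.centralBinom := Nat.mul_le_mul_right _ hAc
    _ = ∑ _P ∈ A, h.centralBinom := by simp
    _ ≤ ∑ P ∈ A, 2 * (2 * h).choose (d - P.card) := Finset.sum_le_sum fun P hP => (hsize P hP).2
    _ = 2 * (A.sigma fun P => R.powersetCard (d - P.card)).card := by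
        rw [Finset.card_sigma, ← Finset.mul_sum]
        simp [Finset.card_powersetCard, hR]
    _ ≤ _ := Nat.mul_le_mul_left _ hinj

/-! ### Affine dependencies and crossings -/

/-- The affine dependencies of `V`, as functions on the whole space whose values outside `V` are
unconstrained. -/
def affDeps (d : ℕ) (V : Finset (Pt d)) : Submodule ℝ (Pt d → ℝ) where
  carrier := {w | ∑ v ∈ V, w v = 0 ∧ ∑ v ∈ V, w v • v = 0}
  add_mem' := by
    rintro a b ⟨h1, h2⟩ ⟨h3, h4⟩
    exact ⟨by simp [Finset.sum_add_distrib, h1, h3],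
      by simp [add_smul, Finset.sum_add_distrib, h2, h4]⟩
  zero_mem' := by simp
  smul_mem' := by
    rintro c a ⟨h1, h2⟩
    exact ⟨by simp [← Finset.mul_sum, h1], by simp [mul_smul, ← Finset.smul_sum, h2]⟩

/-- `d + 1` affinely independent points in `ℝ^d`, lifted to `ℝ^d × ℝ`, span that space. -/
lemma exists_weights {d : ℕ} {T : Finset (Pt d)}
    (hT : AffineIndependent ℝ (fun x : T => (x : Pt d))) (hc : T.card = d + 1)
    (u : Pt d) (a : ℝ) : ∃ c : Pt d → ℝ, ∑ x ∈ T, c x = a ∧ ∑ x ∈ T, c x • x = u := by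
  classical
  have htop : affineSpan ℝ (Set.range fun x : T => (x : Pt d)) = ⊤ := by
    rw [hT.affineSpan_eq_top_iff_card_eq_finrank_add_one]
    simp [hc]
  let b : AffineBasis T ℝ (Pt d) := ⟨fun x => x, hT, htop⟩
  have hb : ∀ x : T, b x = x := fun _ => rfl
  -- the difference of the coordinates of `u` and `0` sums to zero; the last term corrects the sum
  let c' : T → ℝ := fun x => b.coord x u - b.coord x 0 + a * b.coord x 0
  have h1 : ∑ x : T, c' x = a := by
    simp only [c', Finset.sum_add_distrib, Finset.sum_sub_distrib, ← Finset.mul_sum,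
      b.sum_coord_apply_eq_one]
    ring
  have h2 : ∑ x : T, c' x • (x : Pt d) = u := by
    have h3 := b.linear_combination_coord_eq_self u
    have h4 := b.linear_combination_coord_eq_self 0
    simp only [hb] at h3 h4
    simp only [c', add_smul, sub_smul, mul_smul, Finset.sum_add_distrib, Finset.sum_sub_distrib,
      ← Finset.smul_sum, h3, h4]
    simp
  refine ⟨fun x => if h : x ∈ T then c' ⟨x, h⟩ else 0, ?_, ?_⟩
  · rw [← h1, ← Finset.sum_coe_sort]
    exact Finset.sum_congr rfl fun x _ => by simp
  · rw [← h2, ← Finset.sum_coe_sort]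
    exact Finset.sum_congr rfl fun x _ => by simp

lemma interpolates_affDeps {d : ℕ} {V : Finset (Pt d)} (hd : 1 ≤ d) (hV : V.card = 2 * d)
    (hg : GenPos d V) : Interpolates (affDeps d V) V (d - 1) := by
  classical
  intro S hS hSc g
  obtain ⟨T, hTS, hTc⟩ := Finset.exists_subset_card_eq (s := V \ S) (n := d + 1)
    (by rw [Finset.card_sdiff_of_subset hS]; omega)
  have hTV : T ⊆ V := hTS.trans Finset.sdiff_subset
  have hST : Disjoint S T := Finset.disjoint_sdiff.mono_right hTS
  obtain ⟨c, hc1, hc2⟩ := exists_weights (hg T hTV hTc.le) hTc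
    (-∑ x ∈ S, g x • x) (-∑ x ∈ S, g x)
  have hsub : S ∪ T ⊆ V := Finset.union_subset hS hTV
  set w : Pt d → ℝ := fun x => if x ∈ S then g x else if x ∈ T then c x else 0 with hw
  have hwS : ∀ x ∈ S, w x = g x := fun x hx => by simp [hw, hx]
  have hwT : ∀ x ∈ T, w x = c x := fun x hx => by
    simp [hw, hx, Finset.disjoint_right.1 hST hx]
  have hw0 : ∀ x ∈ V, x ∉ S ∪ T → w x = 0 := fun x _ hx => by
    simp only [Finset.mem_union, not_or] at hx; simp [hw, hx]
  refine ⟨w, ⟨?_, ?_⟩, hwS⟩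
  · rw [← Finset.sum_subset hsub hw0, Finset.sum_union hST, Finset.sum_congr rfl hwS,
      Finset.sum_congr rfl hwT, hc1]
    ring
  · rw [← Finset.sum_subset hsub fun x hx hx' => by rw [hw0 x hx hx', zero_smul],
      Finset.sum_union hST, Finset.sum_congr rfl fun x hx => by rw [hwS x hx],
      Finset.sum_congr rfl (fun x hx => by rw [hwT x hx] : ∀ x ∈ T, w x • x = c x • x), hc2]
    abel

/-- Convex combinations of the vertices of a simplex with positive coefficients lie in its relative
interior. -/
lemma mem_intrinsicInterior_convexHull {d : ℕ} {B : Finset (Pt d)}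
    (hB : AffineIndependent ℝ (fun x : B => (x : Pt d))) (c : Pt d → ℝ)
    (hpos : ∀ x ∈ B, 0 < c x) (hsum : ∑ x ∈ B, c x = 1) :
    ∑ x ∈ B, c x • x ∈ intrinsicInterior ℝ (convexHull ℝ (B : Set (Pt d))) := by
  classical
  obtain ⟨t, hBt, hti, httop⟩ := exists_subset_affineIndependent_affineSpan_eq_top
    (k := ℝ) (s := (B : Set (Pt d))) hB
  let b : AffineBasis t ℝ (Pt d) := ⟨fun x => x, hti, by simpa using httop⟩
  have hcoord : ∀ (a : Pt d → ℝ), ∑ x ∈ B, a x = 1 → ∀ (x : Pt d) (hx : x ∈ B),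
      b.coord ⟨x, hBt hx⟩ (∑ y ∈ B, a y • y) = a x := by
    intro a ha x hx
    let f : B ↪ t :=
      ⟨fun y => ⟨y.1, hBt y.2⟩, fun y z h => Subtype.ext (congrArg (fun u : t => u.1) h)⟩
    let s : Finset t := B.attach.map f
    have hs1 : ∑ y ∈ s, a y.1 = 1 := by
      rw [← ha, Finset.sum_map, ← Finset.sum_attach B]; rfl
    have hs2 : s.affineCombination ℝ b (fun y => a y.1) = ∑ y ∈ B, a y • y := by
      rw [Finset.affineCombination_eq_linear_combination _ _ _ hs1, Finset.sum_map,
        ← Finset.sum_attach B]; rfl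
    have hxs : (⟨x, hBt hx⟩ : t) ∈ s :=
      Finset.mem_map.2 ⟨⟨x, hx⟩, Finset.mem_attach _ _, rfl⟩
    rw [← hs2]
    exact b.coord_apply_combination_of_mem hxs hs1
  have hspan : ∀ q ∈ affineSpan ℝ (B : Set (Pt d)), ∃ a : Pt d → ℝ,
      ∑ x ∈ B, a x = 1 ∧ q = ∑ x ∈ B, a x • x := by
    intro q hq
    have hq' : q ∈ affineSpan ℝ (Set.range fun x : B => (x : Pt d)) := by
      simpa using hq
    obtain ⟨a, ha, haq⟩ := eq_affineCombination_of_mem_affineSpan_of_fintype hq'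
    rw [Finset.affineCombination_eq_linear_combination _ _ _ ha] at haq
    refine ⟨fun x => if h : x ∈ B then a ⟨x, h⟩ else 0, ?_, ?_⟩
    · rw [← ha, ← Finset.sum_coe_sort]
      exact Finset.sum_congr rfl fun x _ => by simp
    · rw [haq, ← Finset.sum_coe_sort B]
      exact Finset.sum_congr rfl fun x _ => by simp
  have hmem : ∀ a : Pt d → ℝ, (∀ x ∈ B, 0 < a x) → ∑ x ∈ B, a x = 1 →
      ∑ x ∈ B, a x • x ∈ convexHull ℝ (B : Set (Pt d)) := fun a h1 h2 =>
    (convex_convexHull ℝ _).sum_mem (fun x hx => (h1 x hx).le) h2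
      fun x hx => subset_convexHull ℝ _ hx
  have hp := hmem c hpos hsum
  rw [mem_intrinsicInterior]
  refine ⟨⟨_, subset_affineSpan ℝ _ hp⟩, ?_, rfl⟩
  -- the barycentric coordinates at points of `B` extend continuously to all of `ℝ^d`
  let O : Set (Pt d) := ⋂ x : B, {q | 0 < b.coord ⟨x.1, hBt x.2⟩ q}
  have hO : IsOpen O := isOpen_iInter_of_finite fun x =>
    isOpen_lt continuous_const (continuous_barycentric_coord b _)
  refine mem_interior.2 ⟨(↑) ⁻¹' O, ?_, hO.preimage continuous_subtype_val, ?_⟩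
  · rintro ⟨q, hq⟩ hqO
    rw [affineSpan_convexHull] at hq
    obtain ⟨a, ha, rfl⟩ := hspan q hq
    refine hmem a (fun x hx => ?_) ha
    have := Set.mem_iInter.1 hqO ⟨x, hx⟩
    simpa [hcoord a ha x hx] using this
  · refine Set.mem_iInter.2 fun x => ?_
    simpa [hcoord c hsum x.1 x.2] using hpos x.1 x.2

lemma crossingPair_of_isPat {d : ℕ} {V : Finset (Pt d)} (hd : 1 ≤ d) (hV : V.card = 2 * d)
    (hg : GenPos d V) [DecidableEq (Pt d)] {B : Finset (Pt d)}
    (hB : IsPat (affDeps d V) ∅ V B) (hBc : B.card = d) : CrossingPair d B (V \ B) := by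
  obtain ⟨hBV, w, ⟨hw1, hw2⟩, -, hpos, hneg⟩ := hB
  have hCc : (V \ B).card = d := by rw [Finset.card_sdiff_of_subset hBV]; omega
  refine ⟨Finset.disjoint_sdiff, ?_⟩
  set σ := ∑ x ∈ B, w x with hσ
  have hσpos : 0 < σ := Finset.sum_pos hpos (Finset.card_pos.1 (by omega))
  rw [← Finset.sum_sdiff hBV] at hw1 hw2
  refine ⟨∑ x ∈ B, (w x / σ) • x, ?_, ?_⟩
  · refine mem_intrinsicInterior_convexHull (hg B hBV (by omega)) _
      (fun x hx => div_pos (hpos x hx) hσpos) ?_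
    rw [← Finset.sum_div, div_self hσpos.ne']
  · have heq : ∑ x ∈ B, (w x / σ) • x = ∑ x ∈ V \ B, (-w x / σ) • x := by
      simp only [div_eq_inv_mul, mul_smul, ← Finset.smul_sum, neg_smul, Finset.sum_neg_distrib]
      congr 1
      rw [eq_neg_iff_add_eq_zero, add_comm]; exact hw2
    rw [heq]
    refine mem_intrinsicInterior_convexHull (hg _ Finset.sdiff_subset (by omega)) _
      (fun x hx => div_pos ?_ hσpos) ?_
    · obtain ⟨h1, h2⟩ := Finset.mem_sdiff.1 hx
      linarith [hneg x h1 h2]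
    · rw [← Finset.sum_div, Finset.sum_neg_distrib, div_eq_one_iff_eq hσpos.ne']
      linarith

lemma card_balPats_le_ncard {d : ℕ} {V : Finset (Pt d)} (hd : 1 ≤ d) (hV : V.card = 2 * d)
    (hg : GenPos d V) :
    (balPats (affDeps d V) 0 ∅ V).card ≤ 2 * (crossingHyperedgePairs d V).ncard := by
  classical
  set 𝓑 := balPats (affDeps d V) 0 ∅ V
  have hfin : (crossingHyperedgePairs d V).Finite := by
    refine ((V.powerset ×ˢ V.powerset).image fun p => s(p.1, p.2)).finite_toSet.subset ?_
    rintro _ ⟨B, C, rfl, hB, hC, -⟩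
    exact Finset.mem_coe.2 (Finset.mem_image.2 ⟨(B, C), by simp [hB, hC], rfl⟩)
  rw [Set.ncard_eq_toFinset_card _ hfin]
  refine Finset.card_le_mul_card_image_of_maps_to (f := fun B => s(B, V \ B)) ?_ 2 ?_
  · intro B hB
    obtain ⟨hp, h1, h2⟩ := mem_balPats.1 hB
    have hBc : B.card = d := by omega
    rw [Set.Finite.mem_toFinset]
    exact ⟨B, V \ B, rfl, hp.1, Finset.sdiff_subset, hBc,
      by rw [Finset.card_sdiff_of_subset hp.1]; omega, crossingPair_of_isPat hd hV hg hp hBc⟩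
  · intro p _
    induction p using Sym2.ind with
    | _ C D =>
      refine (Finset.card_le_card (t := {C, D}) ?_).trans Finset.card_le_two
      intro B hB
      have := (Finset.mem_filter.1 hB).2
      rw [Sym2.eq_iff] at this
      rcases this with h | h
      · simp [h.1]
      · simp [h.1]

/-! ### The asymptotic estimate -/

lemma final_estimate {d h K : ℕ} (hd : 400 ≤ d) (hh1 : 2 * h ≤ d) (hh2 : d ≤ 2 * h + 9)
    (hK : K = Nat.sqrt (2 * h) - 1) :
    (d : ℝ) ^ ((3 : ℝ) / 2) * 2 ^ d ≤ 2000000 * (K.choose 5 * h.centralBinom : ℕ) := by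
  set s := √(d : ℝ) with hs
  have hs2 : s ^ 2 = d := Real.sq_sqrt (by positivity)
  have hs0 : 0 ≤ s := Real.sqrt_nonneg _
  have hd' : (400 : ℝ) ≤ d := by exact_mod_cast hd
  have hs20 : 20 ≤ s := by nlinarith
  have hpow : (d : ℝ) ^ ((3 : ℝ) / 2) = s ^ 3 := by
    rw [hs, Real.sqrt_eq_rpow, ← Real.rpow_natCast, ← Real.rpow_mul (by positivity)]
    norm_num
  have hq : s / 2 + 6 ≤ Nat.sqrt (2 * h) + 1 := by
    have h1 : 2 * h < (Nat.sqrt (2 * h) + 1) ^ 2 := Nat.lt_succ_sqrt' _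
    have h2 : (2 * h : ℝ) < (Nat.sqrt (2 * h) + 1) ^ 2 := by exact_mod_cast h1
    have h3 : (d : ℝ) ≤ 2 * h + 9 := by exact_mod_cast hh2
    refine le_of_lt (lt_of_pow_lt_pow_left₀ 2 (by positivity) ?_)
    nlinarith
  have hK5 : s / 2 ≤ ((K + 1 - 5 : ℕ) : ℝ) := by
    have h1 : 6 ≤ Nat.sqrt (2 * h) := by
      have : (15 : ℝ) ≤ Nat.sqrt (2 * h) := by linarith
      have : 15 ≤ Nat.sqrt (2 * h) := by exact_mod_cast this
      omega
    have h2 : K + 1 - 5 = Nat.sqrt (2 * h) - 5 := by omega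
    rw [h2]; push_cast [show 5 ≤ Nat.sqrt (2 * h) by omega]; linarith
  have hchoose : s ^ 5 / 3840 ≤ K.choose 5 := by
    have h1 := Nat.pow_le_choose (α := ℝ) 5 K
    have h2 : (s / 2) ^ 5 ≤ ((K + 1 - 5 : ℕ) : ℝ) ^ 5 := by gcongr
    have h3 : (Nat.factorial 5 : ℝ) = 120 := by norm_num [Nat.factorial]
    rw [h3] at h1
    calc s ^ 5 / 3840 = (s / 2) ^ 5 / 120 := by ring
      _ ≤ ((K + 1 - 5 : ℕ) : ℝ) ^ 5 / 120 := by gcongr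
      _ ≤ _ := by exact_mod_cast h1
  have hcb : (2 : ℝ) ^ d ≤ 512 * s ^ 2 * h.centralBinom := by
    have h1 := Nat.four_pow_le_two_mul_self_mul_centralBinom h (by omega)
    have h2 : (2 : ℝ) ^ d ≤ 2 ^ (2 * h + 9) := pow_le_pow_right₀ (by norm_num) hh2
    have h3 : (4 : ℝ) ^ h ≤ 2 * h * h.centralBinom := by exact_mod_cast h1
    have h4 : (2 * h : ℝ) ≤ s ^ 2 := by rw [hs2]; exact_mod_cast hh1
    calc (2 : ℝ) ^ d ≤ 2 ^ (2 * h + 9) := h2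
      _ = 512 * 4 ^ h := by rw [pow_add, pow_mul]; norm_num; ring
      _ ≤ 512 * (2 * h * h.centralBinom) := by gcongr
      _ ≤ 512 * (s ^ 2 * h.centralBinom) := by gcongr
      _ = _ := by ring
  rw [hpow]
  push_cast
  have hc0 : (0 : ℝ) ≤ h.centralBinom := by positivity
  calc s ^ 3 * 2 ^ d ≤ s ^ 3 * (512 * s ^ 2 * h.centralBinom) := by gcongr
    _ = 1966080 * (s ^ 5 / 3840 * h.centralBinom) := by ring
    _ ≤ 2000000 * (K.choose 5 * h.centralBinom) := by gcongr; norm_num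

/-- If the `2d` vertices form a `d`-dimensional `t`-neighborly but not
`(t+1)`-neighborly polytope, there are `Ω(2^d d^{3/2})` crossing pairs. -/
theorem crossing_number_t_neighborly_lower_bound :
    ∀ t : ℕ, 1 ≤ t →
      ∃ (c : ℝ) (d₀ : ℕ), 0 < c ∧
        ∀ d : ℕ, d₀ ≤ d → ∀ V : Finset (Pt d), V.card = 2 * d → GenPos d V →
          ConvexPos d V → affineSpan ℝ (V : Set (Pt d)) = ⊤ →
          Neighborly d t V → ¬ Neighborly d (t + 1) V →
          c * 2 ^ d * (d : ℝ) ^ ((3 : ℝ) / 2) ≤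
            ((crossingHyperedgePairs d V).ncard : ℝ) := by
  classical
  intro t _
  refine ⟨1 / 8000000, 400, by norm_num, ?_⟩
  intro d hd V hV hg _ _ _ _
  -- the largest `h` with `2 * h + 5 + 2 ≤ d - 1`, and the largest `K` with `(K + 1) ^ 2 ≤ 2 * h`
  set h := (d - 8) / 2 with hh
  set K := Nat.sqrt (2 * h) - 1 with hK
  have hsq : 1 ≤ Nat.sqrt (2 * h) := Nat.sqrt_pos.2 (by omega)
  have h1 := choose_mul_le_card_balanced (K := K) (k := 5) (h := h)
    (interpolates_affDeps (by omega) hV hg) hV (by omega) (by omega)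
    (by rw [hK, Nat.sub_add_cancel hsq]; exact Nat.sqrt_le' _) (by omega)
  have h2 := card_balPats_le_ncard (by omega) hV hg
  have h3 := final_estimate hd (by omega) (by omega) hK
  have h4 : ((K.choose 5 * h.centralBinom : ℕ) : ℝ) ≤
      4 * ((crossingHyperedgePairs d V).ncard : ℝ) := by
    exact_mod_cast (by omega : K.choose 5 * h.centralBinom ≤
      4 * (crossingHyperedgePairs d V).ncard)
  linarith
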